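/- Let p ≥ 3 be a prime. Then there exists a set of p−1 mutually orthogonal binary frequency squares of order 2p, i.e., a (p−1)-MOFS(2p;2). -/

import Mathlib

/-- An `m × n` frequency rectangle on `q` symbols: each symbol appears exactly
`n/q` times in each row and `m/q` times in each column. -/
def IsFreqRect (m n q : ℕ) (F : Fin m → Fin n → Fin q) : Prop :=
  (∀ i : Fin m, ∀ s : Fin q,
      ((Finset.univ : Finset (Fin n)).filter (fun j => F i j = s)).card * q = n) ∧
  (∀ j : Fin n, ∀ s : Fin q,
      ((Finset.univ : Finset (Fin m)).filter (fun i => F i j = s)).card * q = m)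

/-- Two frequency rectangles are orthogonal: upon superimposition each ordered
pair of symbols appears exactly `m*n/q^2` times. -/
def OrthogonalFR (m n q : ℕ) (F G : Fin m → Fin n → Fin q) : Prop :=
  ∀ a b : Fin q,
    ((Finset.univ : Finset (Fin m × Fin n)).filter
        (fun p => F p.1 p.2 = a ∧ G p.1 p.2 = b)).card * q ^ 2 = m * n

/-- A `k`-MOFR`(m,n;q)`: a family of `k` frequency rectangles, pairwise orthogonal. -/
def IsMOFR (m n q k : ℕ) (F : Fin k → Fin m → Fin n → Fin q) : Prop :=
  (∀ i, IsFreqRect m n q (F i)) ∧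
  (∀ i j, i ≠ j → OrthogonalFR m n q (F i) (F j))

/-- An orthogonal array OA`(N,k,q,t)`. -/
def IsOA (N k q t : ℕ) (A : Fin N → Fin k → Fin q) : Prop :=
  ∀ c : Fin t → Fin k, Function.Injective c →
    ∀ y : Fin t → Fin q,
      ((Finset.univ : Finset (Fin N)).filter (fun r => ∀ s, A r (c s) = y s)).card * q ^ t = N

/-- A family of frequency rectangles is `t`-orthogonal: superimposing any `t` of
them, each ordered `t`-tuple of symbols occurs exactly `m*n/q^t` times. -/
def IsTOrthogonal (m n q t k : ℕ) (F : Fin k → Fin m → Fin n → Fin q) : Prop :=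
  ∀ c : Fin t → Fin k, Function.Injective c →
    ∀ y : Fin t → Fin q,
      ((Finset.univ : Finset (Fin m × Fin n)).filter
          (fun p => ∀ s, F (c s) p.1 p.2 = y s)).card * q ^ t = m * n

/-- A Hadamard matrix of order `n` (entries `±1`, `H Hᵀ = n I`). -/
def IsHadamard (n : ℕ) (H : Matrix (Fin n) (Fin n) ℤ) : Prop :=
  (∀ i j, H i j = 1 ∨ H i j = -1) ∧
  H * H.transpose = (n : ℤ) • (1 : Matrix (Fin n) (Fin n) ℤ)

/-!
Write the rows and columns of a square of order `2q` as pairs `(i, e)` and `(j, f)` with `i`, `j` in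
the field of order `q` and `e`, `f` signs, and use signs as symbols. For a sign function `g` that is
odd away from `0`, the squares with entries `g (j - k * i) * e * f`, one for each nonzero `k`, have
zero row and column sums, but two of them have inner product `4` instead of `0`. This defect is
removed by altering the block rows `i = 0` and `i = 1`: some of their blocks are replaced by blocks
`± e` or `± f`, which are orthogonal to the blocks `± e * f` and to each other, in such a way that
the coefficients of `e` cancel along every row and those of `f` along every column.
-/

namespace BinaryMOFS

open Finset

section Counting

variable {ι : Type*} [Fintype ι]

theorem two_mul_indicator_eq (u s : ℤˣ) : 2 * (if u = s then 1 else 0 : ℤ) = 1 + s * u := by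
  decide +revert

theorem card_filter_eq_mul_two {v : ι → ℤˣ} (hv : ∑ x, (v x : ℤ) = 0) (s : ℤˣ) :
    #{x | v x = s} * 2 = Fintype.card ι := by
  zify
  rw [natCast_card_filter, mul_comm, mul_sum]
  simp only [two_mul_indicator_eq, sum_add_distrib, ← mul_sum, hv]
  simp

theorem card_filter_and_eq_mul_two_sq {v w : ι → ℤˣ} (hv : ∑ x, (v x : ℤ) = 0)
    (hw : ∑ x, (w x : ℤ) = 0) (hvw : ∑ x, (v x * w x : ℤ) = 0) (s t : ℤˣ) :
    #{x | v x = s ∧ w x = t} * 2 ^ 2 = Fintype.card ι := by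
  have indicator_and (x : ι) : 2 ^ 2 * (if v x = s ∧ w x = t then 1 else 0 : ℤ) =
      1 + s * v x + t * w x + s * t * (v x * w x) := by
    calc 2 ^ 2 * (if v x = s ∧ w x = t then 1 else 0 : ℤ)
        = (2 * if v x = s then 1 else 0) * (2 * if w x = t then 1 else 0) := by
          rw [ite_and]; split_ifs <;> norm_num
      _ = 1 + s * v x + t * w x + s * t * (v x * w x) := by
          rw [two_mul_indicator_eq, two_mul_indicator_eq]; ring
  zify
  rw [natCast_card_filter, mul_comm, mul_sum]
  simp only [indicator_and, sum_add_distrib, ← mul_sum, hv, hw, hvw]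
  simp

theorem exists_isMOFR_of_sum_eq_zero {X Y : Type*} [Fintype X] [Fintype Y] {m n r : ℕ}
    (hm : Fintype.card X = m) (hn : Fintype.card Y = n) (V : Fin r → X → Y → ℤˣ)
    (hrow : ∀ k x, ∑ y, (V k x y : ℤ) = 0) (hcol : ∀ k y, ∑ x, (V k x y : ℤ) = 0)
    (horth : ∀ k l, k ≠ l → ∑ x, ∑ y, (V k x y * V l x y : ℤ) = 0) :
    ∃ F : Fin r → Fin m → Fin n → Fin 2, IsMOFR m n 2 r F := by
  let a : Fin m ≃ X := (Fintype.equivFinOfCardEq hm).symm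
  let b : Fin n ≃ Y := (Fintype.equivFinOfCardEq hn).symm
  let symbol : ℤˣ ≃ Fin 2 := Fintype.equivFinOfCardEq rfl
  have sum_reindex (f : X → Y → ℤ) :
      ∑ c : Fin m × Fin n, f (a c.1) (b c.2) = ∑ x, ∑ y, f x y := by
    rw [Fintype.sum_prod_type, ← a.sum_comp]
    exact sum_congr rfl fun i _ => b.sum_comp (f (a i))
  have htotal (k : Fin r) : ∑ c : Fin m × Fin n, (V k (a c.1) (b c.2) : ℤ) = 0 := by
    simp [sum_reindex (fun x y => (V k x y : ℤ)), hrow]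
  refine ⟨fun k i j => symbol (V k (a i) (b j)), fun k => ⟨fun i s => ?_, fun j s => ?_⟩,
    fun k l hkl s t => ?_⟩ <;> simp only [← symbol.eq_symm_apply]
  · simpa using card_filter_eq_mul_two ((b.sum_comp _).trans (hrow k (a i))) (symbol.symm s)
  · simpa using card_filter_eq_mul_two ((a.sum_comp _).trans (hcol k (b j))) (symbol.symm s)
  · simpa using card_filter_and_eq_mul_two_sq (htotal k) (htotal l)
      ((sum_reindex _).trans (horth k l hkl)) (symbol.symm s) (symbol.symm t)

end Counting

theorem sum_intUnits {M : Type*} [AddCommMonoid M] (f : ℤˣ → M) : ∑ e, f e = f 1 + f (-1) := by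
  simp

/-- A `2 × 2` sign matrix, with rows and columns indexed by signs `e` and `f`, whose entries are
`s * e` (`row s`), `s * f` (`col s`) or `s * e * f` (`both s`). These are the six `2 × 2` sign
matrices with total sum zero. -/
inductive SignBlock
  | row (s : ℤˣ)
  | col (s : ℤˣ)
  | both (s : ℤˣ)

namespace SignBlock

/-- The entry of a sign block in row `e` and column `f`. -/
def entry : SignBlock → ℤˣ → ℤˣ → ℤˣ
  | row s, e, _ => s * e
  | col s, _, f => s * f
  | both s, e, f => s * e * f

/-- The coefficient of the row sign in the entries of a sign block: half the sum of row `1`. -/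
def rowCoeff : SignBlock → ℤ
  | row s => s
  | _ => 0

/-- The coefficient of the column sign in the entries of a sign block: half the sum of
column `1`. -/
def colCoeff : SignBlock → ℤ
  | col s => s
  | _ => 0

/-- The normalised inner product of two sign blocks: a quarter of the sum of the products of their
entries. -/
def inner : SignBlock → SignBlock → ℤ
  | row s, row t => s * t
  | col s, col t => s * t
  | both s, both t => s * t
  | _, _ => 0

theorem sum_entry_right (b : SignBlock) (e : ℤˣ) :
    ∑ f, (b.entry e f : ℤ) = b.rowCoeff * (2 * e) := by
  cases b <;> simp [entry, rowCoeff, two_mul, mul_add]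

theorem sum_entry_left (b : SignBlock) (f : ℤˣ) :
    ∑ e, (b.entry e f : ℤ) = b.colCoeff * (2 * f) := by
  cases b <;> simp [entry, colCoeff, two_mul, mul_add]

theorem sum_entry_mul_entry (b c : SignBlock) :
    ∑ e, ∑ f, (b.entry e f * c.entry e f : ℤ) = 4 * b.inner c := by
  cases b <;> cases c <;>
    simp only [entry, inner, sum_intUnits, Units.val_mul, Units.val_neg, Units.val_one] <;> ring

theorem exists_isMOFR {X Y : Type*} [Fintype X] [Fintype Y] {r : ℕ}
    (B : Fin r → X → Y → SignBlock)
    (hrow : ∀ k i, ∑ j, (B k i j).rowCoeff = 0) (hcol : ∀ k j, ∑ i, (B k i j).colCoeff = 0)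
    (horth : ∀ k l, k ≠ l → ∑ i, ∑ j, (B k i j).inner (B l i j) = 0) :
    ∃ F : Fin r → Fin (2 * Fintype.card X) → Fin (2 * Fintype.card Y) → Fin 2,
      IsMOFR (2 * Fintype.card X) (2 * Fintype.card Y) 2 r F := by
  refine exists_isMOFR_of_sum_eq_zero (X := X × ℤˣ) (Y := Y × ℤˣ) (by simp [mul_comm])
    (by simp [mul_comm]) (fun k x y => (B k x.1 y.1).entry x.2 y.2) (fun k x => ?_)
    (fun k y => ?_) fun k l hkl => ?_
  · simp only [Fintype.sum_prod_type, sum_entry_right, ← sum_mul, hrow, zero_mul]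
  · simp only [Fintype.sum_prod_type, sum_entry_left, ← sum_mul, hcol, zero_mul]
  · simp only [Fintype.sum_prod_type]
    calc ∑ i, ∑ e, ∑ j, ∑ f, ((B k i j).entry e f * (B l i j).entry e f : ℤ)
        = ∑ i, ∑ j, ∑ e, ∑ f, ((B k i j).entry e f * (B l i j).entry e f : ℤ) :=
          sum_congr rfl fun i _ => sum_comm
      _ = 0 := by simp only [sum_entry_mul_entry, ← mul_sum, horth k l hkl, mul_zero]

/-- The block `both 1` if `s = 1` and `col u` if `s = -1`. For fixed `u` the inner product of two
such blocks detects whether their parameters `s` agree. -/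
def ofSign (u s : ℤˣ) : SignBlock :=
  if s = 1 then both 1 else col u

theorem two_mul_inner_ofSign (u s t : ℤˣ) :
    2 * (ofSign u s).inner (ofSign u t) = 1 + s * t := by
  rcases Int.units_eq_one_or s with rfl | rfl <;> rcases Int.units_eq_one_or t with rfl | rfl <;>
    simp [ofSign, inner]

theorem inner_row_ofSign (r u s : ℤˣ) : (row r).inner (ofSign u s) = 0 := by
  unfold ofSign; split_ifs <;> rfl

theorem inner_ofSign_row (r u s : ℤˣ) : (ofSign u s).inner (row r) = 0 := by
  unfold ofSign; split_ifs <;> rfl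

theorem rowCoeff_ofSign (u s : ℤˣ) : (ofSign u s).rowCoeff = 0 := by
  unfold ofSign; split_ifs <;> rfl

theorem colCoeff_ofSign_neg (u s : ℤˣ) : (ofSign (-u) s).colCoeff = -(ofSign u s).colCoeff := by
  unfold ofSign; split_ifs <;> simp [colCoeff]

end SignBlock

/-- A sign function on an additive group that is odd except at `0`, where it is `1`. -/
structure IsOddSign {A : Type*} [AddGroup A] (g : A → ℤˣ) : Prop where
  map_zero : g 0 = 1
  map_neg : ∀ x ≠ 0, g (-x) = -g x

theorem eq_zero_of_neg_eq_of_odd_card {A : Type*} [AddGroup A] [Fintype A]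
    (hA : Odd (Fintype.card A)) {x : A} (hx : -x = x) : x = 0 := by
  have htwo : 2 • x = 0 := by rw [two_nsmul, ← neg_eq_iff_add_eq_zero, hx]
  rw [← AddMonoid.addOrderOf_eq_one_iff]
  exact Nat.eq_one_of_dvd_coprimes hA.coprime_two_left
    (addOrderOf_dvd_of_nsmul_eq_zero htwo) addOrderOf_dvd_card

theorem exists_isOddSign {A : Type*} [AddGroup A] (hA : ∀ x : A, -x = x → x = 0) :
    ∃ g : A → ℤˣ, IsOddSign g := by
  obtain ⟨_, -⟩ := exists_wellFoundedLT A
  refine ⟨fun x => if x ≤ -x then 1 else -1, by simp, fun x hx => ?_⟩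
  rcases lt_or_gt_of_ne (mt (hA x) hx) with h | h <;> simp [h.le, h.not_ge]

theorem IsOddSign.sum_eq_one {A : Type*} [AddGroup A] [Fintype A] {g : A → ℤˣ}
    (hg : IsOddSign g) : ∑ x, (g x : ℤ) = 1 := by
  classical
  have symmetrized (x : A) : (g x + g (-x) : ℤ) = if x = 0 then 2 else 0 := by
    split_ifs with hx
    · simp [hx, hg.map_zero]
    · simp [hg.map_neg x hx]
  have hdouble : ∑ x, (g x + g (-x) : ℤ) = 2 := by simp [symmetrized]
  have hneg : ∑ x, (g (-x) : ℤ) = ∑ x, (g x : ℤ) :=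
    Equiv.sum_comp (Equiv.neg A) fun x => (g x : ℤ)
  rw [sum_add_distrib, hneg] at hdouble
  lia

section SlopeBlock

variable {R : Type*} [Ring R]

theorem IsOddSign.sum_slope_mul_slope [Fintype R] {g : R → ℤˣ} (hg : IsOddSign g) {k l : R}
    (hkl : IsUnit (k - l)) : ∑ i, ∑ j, (g (j - k * i) * g (j - l * i) : ℤ) = 1 := by
  have shift (i : R) :
      ∑ j, (g (j - k * i) * g (j - l * i) : ℤ) = ∑ j, (g j * g (j + (k - l) * i) : ℤ) := by
    rw [← Equiv.sum_comp (Equiv.addRight (k * i))]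
    exact sum_congr rfl fun j _ => by simp [sub_mul, add_sub_assoc]
  have sum_line (j : R) : ∑ i, (g (j + (k - l) * i) : ℤ) = 1 :=
    (Equiv.sum_comp (hkl.unit.mulLeft.trans (Equiv.addLeft j)) fun x => (g x : ℤ)).trans
      hg.sum_eq_one
  simp only [shift]
  rw [sum_comm]
  simp only [← mul_sum, sum_line, mul_one, hg.sum_eq_one]

variable [DecidableEq R]

/-- The block in position `(i, j)` of the square with slope `k`. Away from the block rows `0` and
`1` it carries the sign of the offset of `j` from the line of slope `k`; in these two rows the
blocks `col (-1)` and `col 1` are paired off in each column, and the two `row` blocks in row `1` are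
opposite. -/
def slopeBlock (g : R → ℤˣ) (k i j : R) : SignBlock :=
  if i = 0 then
    if j = 0 then .both 1 else .ofSign (-1) (g (j - k))
  else if i = 1 then
    if j = 0 then .row (g (-k)) else if j = k then .row (-g (-k)) else .ofSign 1 (g (j - k))
  else .both (g (j - k * i))

theorem slopeBlock_zero (g : R → ℤˣ) (k j : R) :
    slopeBlock g k 0 j = if j = 0 then .both 1 else .ofSign (-1) (g (j - k)) :=
  if_pos rfl

theorem slopeBlock_one [Nontrivial R] (g : R → ℤˣ) (k j : R) :
    slopeBlock g k 1 j = if j = 0 then .row (g (-k)) else if j = k then .row (-g (-k))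
      else .ofSign 1 (g (j - k)) := by
  simp [slopeBlock]

theorem slopeBlock_of_ne (g : R → ℤˣ) (k j : R) {i : R} (hi : i ≠ 0 ∧ i ≠ 1) :
    slopeBlock g k i j = .both (g (j - k * i)) := by
  simp [slopeBlock, hi]

variable [Fintype R]

theorem two_mul_sum_inner_slopeBlock_zero (g : R → ℤˣ) (k l : R) :
    2 * ∑ j, (slopeBlock g k 0 j).inner (slopeBlock g l 0 j) =
      Fintype.card R + ∑ j, (g (j - k) * g (j - l) : ℤ) + (1 - g (-k) * g (-l) : ℤ) := by
  have two_mul_inner (j : R) : 2 * (slopeBlock g k 0 j).inner (slopeBlock g l 0 j) =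
      1 + (g (j - k) * g (j - l) : ℤ) + if j = 0 then (1 - g (-k) * g (-l) : ℤ) else 0 := by
    rw [slopeBlock_zero, slopeBlock_zero]
    split_ifs with hj
    · simp [hj, SignBlock.inner]
    · rw [SignBlock.two_mul_inner_ofSign, add_zero]
  simp [mul_sum, two_mul_inner, sum_add_distrib]

variable [Nontrivial R]

theorem sum_rowCoeff_slopeBlock (g : R → ℤˣ) {k : R} (hk : k ≠ 0) (i : R) :
    ∑ j, (slopeBlock g k i j).rowCoeff = 0 := by
  by_cases hi : i = 1
  · subst hi
    rw [Fintype.sum_eq_add 0 k hk.symm]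
    · simp [slopeBlock_one, hk, SignBlock.rowCoeff]
    · rintro j ⟨hj, hjk⟩
      simp [slopeBlock_one, hj, hjk, SignBlock.rowCoeff_ofSign]
  · refine sum_eq_zero fun j _ => ?_
    unfold slopeBlock
    split_ifs <;> first | rfl | exact SignBlock.rowCoeff_ofSign _ _

theorem IsOddSign.sum_colCoeff_slopeBlock {g : R → ℤˣ} (hg : IsOddSign g) (k j : R) :
    ∑ i, (slopeBlock g k i j).colCoeff = 0 := by
  rw [Fintype.sum_eq_add 0 1 zero_ne_one fun i hi => by
    simp [slopeBlock_of_ne _ _ _ hi, SignBlock.colCoeff], slopeBlock_zero, slopeBlock_one]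
  split_ifs with hj hjk
  · rfl
  · simp [hjk, hg.map_zero, SignBlock.ofSign, SignBlock.colCoeff]
  · rw [SignBlock.colCoeff_ofSign_neg, neg_add_cancel]

theorem IsOddSign.two_mul_sum_inner_slopeBlock_one {g : R → ℤˣ} (hg : IsOddSign g) {k l : R}
    (hk : k ≠ 0) (hl : l ≠ 0) (hkl : k ≠ l) :
    2 * ∑ j, (slopeBlock g k 1 j).inner (slopeBlock g l 1 j) =
      Fintype.card R + ∑ j, (g (j - k) * g (j - l) : ℤ) - (3 - g (-k) * g (-l) : ℤ) := by
  have two_mul_inner (j : R) : 2 * (slopeBlock g k 1 j).inner (slopeBlock g l 1 j) =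
      1 + (g (j - k) * g (j - l) : ℤ) + (if j = 0 then (g (-k) * g (-l) - 1 : ℤ) else 0)
        - (if j = k then (1 + g (k - l) : ℤ) else 0)
        - if j = l then (1 + g (l - k) : ℤ) else 0 := by
    rw [slopeBlock_one, slopeBlock_one]
    rcases eq_or_ne j 0 with rfl | hj
    · simp only [if_true, if_neg hk.symm, if_neg hl.symm, SignBlock.inner, zero_sub]
      ring
    rcases eq_or_ne j k with rfl | hjk
    · simp [hk, hkl, SignBlock.inner_row_ofSign, hg.map_zero]
    rcases eq_or_ne j l with rfl | hjl
    · simp [hl, hkl.symm, SignBlock.inner_ofSign_row, hg.map_zero]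
    · simp [hj, hjk, hjl, SignBlock.two_mul_inner_ofSign]
  have hneg : g (l - k) = -g (k - l) := neg_sub k l ▸ hg.map_neg _ (sub_ne_zero.2 hkl)
  simp only [mul_sum, two_mul_inner, sum_add_distrib, sum_sub_distrib, sum_ite_eq', mem_univ,
    if_true, sum_const, card_univ, nsmul_eq_mul, hneg, Units.val_neg]
  ring

theorem IsOddSign.sum_inner_slopeBlock {g : R → ℤˣ} (hg : IsOddSign g) {k l : R}
    (hk : k ≠ 0) (hl : l ≠ 0) (hkl : IsUnit (k - l)) :
    ∑ i, ∑ j, (slopeBlock g k i j).inner (slopeBlock g l i j) = 0 := by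
  have altered_rows :
      ∑ i, (∑ j, (slopeBlock g k i j).inner (slopeBlock g l i j)
        - ∑ j, (g (j - k * i) * g (j - l * i) : ℤ)) = -1 := by
    rw [Fintype.sum_eq_add 0 1 zero_ne_one fun i hi => by
      simp [slopeBlock_of_ne _ _ _ hi, SignBlock.inner]]
    have hzero := two_mul_sum_inner_slopeBlock_zero g k l
    have hone := hg.two_mul_sum_inner_slopeBlock_one hk hl (sub_ne_zero.1 hkl.ne_zero)
    simp only [mul_zero, sub_zero, mul_one, ← Units.val_mul, Int.units_mul_self, Units.val_one,
      sum_const, card_univ, nsmul_eq_mul] at hzero hone ⊢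
    lia
  rw [sum_sub_distrib, hg.sum_slope_mul_slope hkl] at altered_rows
  lia

end SlopeBlock

theorem exists_isMOFR_of_isUnit_sub {R : Type*} [Ring R] [Fintype R] [Nontrivial R]
    (hR : Odd (Fintype.card R)) {r : ℕ} (κ : Fin r → R) (hκ : ∀ k, κ k ≠ 0)
    (hsub : ∀ k l, k ≠ l → IsUnit (κ k - κ l)) :
    ∃ F : Fin r → Fin (2 * Fintype.card R) → Fin (2 * Fintype.card R) → Fin 2,
      IsMOFR (2 * Fintype.card R) (2 * Fintype.card R) 2 r F := by
  classical
  obtain ⟨g, hg⟩ := exists_isOddSign fun x : R => eq_zero_of_neg_eq_of_odd_card hR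
  exact SignBlock.exists_isMOFR (fun k => slopeBlock g (κ k))
    (fun k => sum_rowCoeff_slopeBlock g (hκ k)) (fun k => hg.sum_colCoeff_slopeBlock (κ k))
    fun k l hkl => hg.sum_inner_slopeBlock (hκ k) (hκ l) (hsub k l hkl)

theorem exists_isMOFR_of_field (K : Type*) [Field K] [Fintype K] (hK : Odd (Fintype.card K)) :
    ∃ F : Fin (Fintype.card K - 1) → Fin (2 * Fintype.card K) → Fin (2 * Fintype.card K) → Fin 2,
      IsMOFR (2 * Fintype.card K) (2 * Fintype.card K) 2 (Fintype.card K - 1) F := by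
  classical
  let units : Fin (Fintype.card K - 1) ≃ Kˣ :=
    (Fintype.equivFinOfCardEq (Fintype.card_units K)).symm
  exact exists_isMOFR_of_isUnit_sub hK (fun k => units k) (fun k => (units k).ne_zero)
    fun k l hkl => (sub_ne_zero.2 (Units.val_injective.ne (units.injective.ne hkl))).isUnit

end BinaryMOFS

theorem binary_mofs_2p_general {q : ℕ} (hq : IsPrimePow q) (hodd : Odd q) :
    ∃ F : Fin (q - 1) → Fin (2 * q) → Fin (2 * q) → Fin 2,
      IsMOFR (2 * q) (2 * q) 2 (q - 1) F := by
  obtain ⟨p, n, hp, hn, rfl⟩ := hq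
  have : Fact p.Prime := ⟨hp.nat_prime⟩
  have := Fintype.ofFinite (GaloisField p n)
  have hcard : Fintype.card (GaloisField p n) = p ^ n := by
    rw [Fintype.card_eq_nat_card, GaloisField.card p n hn.ne']
  exact hcard ▸ BinaryMOFS.exists_isMOFR_of_field (GaloisField p n) (hcard.symm ▸ hodd)

/-- For every prime p ≥ 3 there is a set of p-1 mutually orthogonal binary
frequency squares of order 2p. -/
theorem binary_mofs_2p (p : ℕ) (hp : p.Prime) (h3 : 3 ≤ p) :
    ∃ F : Fin (p - 1) → Fin (2 * p) → Fin (2 * p) → Fin 2,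
      IsMOFR (2 * p) (2 * p) 2 (p - 1) F :=
  binary_mofs_2p_general hp.isPrimePow (hp.odd_of_ne_two (by lia))
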